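/- Let X = [x_0, …, x_k] be k+1 unit vectors in ℝ^(n+1), pairwise non-antipodal, viewed as points of S^n. The points are affinely independent on the sphere (i.e., for each i, the vectors {log_{x_i}(x_j)}_{j≠i} are linearly independent in T_{x_i}S^n) if and only if the matrix X has rank k+1. -/

import Mathlib

/-!
For unit vectors `x` and `y ≠ ±x`, the vector `log_x(y)` is a nonzero multiple of the orthogonal
projection of `y` onto `xᗮ`, a map whose kernel is the line through `x`. The tangent vectors at
`x i` are thus, up to scaling, the images of the `x j`, `j ≠ i`, modulo the line through `x i`.
Since `x i ≠ 0`, these are linearly independent exactly when the whole family `x` is.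
-/

open scoped RealInnerProductSpace

/-- The spherical Riemannian log `log_x(y) = (θ/sinθ)(y - cosθ • x)`,
`θ = arccos ⟪x,y⟫`. -/
noncomputable def sphLog {n : ℕ} (x y : EuclideanSpace ℝ (Fin (n + 1))) :
    EuclideanSpace ℝ (Fin (n + 1)) :=
  (Real.arccos ⟪x, y⟫ / Real.sin (Real.arccos ⟪x, y⟫)) •
    (y - Real.cos (Real.arccos ⟪x, y⟫) • x)

section LinearAlgebra

variable {R M N ι : Type*} [Ring R] [AddCommGroup M] [Module R M] [AddCommGroup N] [Module R N]

theorem linearIndepOn_comp_iff_of_ker_eq_span {v : ι → M} {s t : Set ι} {f : M →ₗ[R] N}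
    (hs : LinearIndepOn R v s) (hst : Disjoint s t) (hf : f.ker = Submodule.span R (v '' s)) :
    LinearIndepOn R (f ∘ v) t ↔ LinearIndepOn R v (s ∪ t) := by
  let g := (Submodule.span R (v '' s)).liftQ f hf.ge
  have hg : g.ker = ⊥ := Submodule.ker_liftQ_eq_bot' _ f hf.symm
  exact (g.linearIndependent_iff hg).trans (hs.quotient_iff_union hst)

end LinearAlgebra

section InnerProductSpace

open Submodule (span)

variable {𝕜 E ι : Type*} [RCLike 𝕜] [NormedAddCommGroup E] [InnerProductSpace 𝕜 E]

theorem linearIndependent_starProjection_orthogonal_iff {v : ι → E} {i : ι} (hi : v i ≠ 0) :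
    LinearIndependent 𝕜 (fun j : {j // j ≠ i} => (span 𝕜 {v i})ᗮ.starProjection (v j)) ↔
      LinearIndependent 𝕜 v := by
  have hker : (span 𝕜 {v i})ᗮ.starProjection.ker = span 𝕜 (v '' {i}) := by
    rw [Submodule.ker_starProjection, Submodule.orthogonal_orthogonal, Set.image_singleton]
  have h := linearIndepOn_comp_iff_of_ker_eq_span (LinearIndepOn.singleton (R := 𝕜) hi)
    disjoint_compl_right hker
  rwa [Set.union_compl_self, linearIndepOn_univ_iff] at h

end InnerProductSpace

section SphericalLog

open Set Real
open Submodule (span)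

variable {E ι : Type*} [NormedAddCommGroup E] [InnerProductSpace ℝ E] {x y : E}

theorem real_inner_mem_Ioo_of_norm_eq_one (hx : ‖x‖ = 1) (hy : ‖y‖ = 1) (hne : y ≠ x)
    (hne_neg : y ≠ -x) : ⟪x, y⟫ ∈ Ioo (-1) 1 := by
  have hneg_one : ⟪x, y⟫ ≠ -1 := fun h =>
    hne_neg (neg_eq_iff_eq_neg.mpr ((inner_eq_neg_one_iff_of_norm_eq_one hx hy).mp h)).symm
  exact ⟨(neg_one_le_real_inner_of_norm_eq_one hx hy).lt_of_ne' hneg_one,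
    (inner_lt_one_iff_real_of_norm_eq_one hx hy).mpr hne.symm⟩

theorem arccos_div_sin_arccos_pos {t : ℝ} (ht : t ∈ Ioo (-1) 1) :
    0 < arccos t / sin (arccos t) :=
  have hpos : 0 < arccos t := arccos_pos.mpr ht.2
  div_pos hpos (sin_pos_of_pos_of_lt_pi hpos (arccos_lt_pi.mpr ht.1))

/-- The Riemannian logarithm `log_x(y)` on the unit sphere of an arbitrary real inner product space,
as a vector of the ambient space; `sphLog` is the case `E = ℝⁿ⁺¹`. At the antipode `y = -x` of a
unit vector, where the logarithm is undefined, it has the junk value `0`. -/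
noncomputable def sphericalLog (x y : E) : E :=
  (arccos ⟪x, y⟫ / sin (arccos ⟪x, y⟫)) • (y - cos (arccos ⟪x, y⟫) • x)

theorem sphericalLog_eq_smul_starProjection (hx : ‖x‖ = 1) (hy : ‖y‖ = 1) :
    sphericalLog x y =
      (arccos ⟪x, y⟫ / sin (arccos ⟪x, y⟫)) • (span ℝ {x})ᗮ.starProjection y := by
  have hcos : cos (arccos ⟪x, y⟫) = ⟪x, y⟫ :=
    cos_arccos (neg_one_le_real_inner_of_norm_eq_one hx hy)
      (real_inner_le_one_of_norm_eq_one hx hy)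
  rw [sphericalLog, hcos, Submodule.starProjection_orthogonal_val,
    Submodule.starProjection_unit_singleton ℝ hx]

theorem stmt7_general {v : ι → E} (hunit : ∀ j, ‖v j‖ = 1) (i : ι)
    (hdist : ∀ j, j ≠ i → v j ≠ v i ∧ v j ≠ -v i) :
    LinearIndependent ℝ (fun j : {j // j ≠ i} => sphericalLog (v i) (v j)) ↔
      LinearIndependent ℝ v := by
  let scale (j : {j // j ≠ i}) : ℝ := arccos ⟪v i, v j⟫ / sin (arccos ⟪v i, v j⟫)
  have hscale (j : {j // j ≠ i}) : scale j ≠ 0 :=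
    have ⟨hne, hne_neg⟩ := hdist j j.2
    (arccos_div_sin_arccos_pos
      (real_inner_mem_Ioo_of_norm_eq_one (hunit i) (hunit j) hne hne_neg)).ne'
  have hlog : (fun j : {j // j ≠ i} => sphericalLog (v i) (v j)) =
      (fun j => Units.mk0 (scale j) (hscale j)) •
        fun j : {j // j ≠ i} => (span ℝ {v i})ᗮ.starProjection (v j) :=
    funext fun j => sphericalLog_eq_smul_starProjection (hunit i) (hunit j)
  have hi : v i ≠ 0 := norm_ne_zero_iff.mp (by simp [hunit i])
  rw [hlog, LinearIndependent.units_smul_iff, linearIndependent_starProjection_orthogonal_iff hi]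

end SphericalLog

/-- `k+1` pairwise non-identical and non-antipodal unit vectors on `S^n` are
affinely independent (for each `i` the tangent vectors `log_{x_i}(x_j)`, `j ≠ i`,
are linearly independent) iff the matrix `X = [x_0, …, x_k]` has rank `k+1`,
i.e. iff the `x_i` are linearly independent. -/
theorem stmt7 {n k : ℕ} (x : Fin (k + 1) → EuclideanSpace ℝ (Fin (n + 1)))
    (hunit : ∀ i, ‖x i‖ = 1)
    (hdist : ∀ i j, i ≠ j → x j ≠ x i ∧ x j ≠ -x i) :
    (∀ i : Fin (k + 1),
        LinearIndependent ℝ (fun j : {j : Fin (k + 1) // j ≠ i} => sphLog (x i) (x j)))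
      ↔ LinearIndependent ℝ x :=
  (forall_congr' fun i => stmt7_general hunit i fun j hj => hdist i j hj.symm).trans
    (forall_const _)
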